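/- Soundness and eventual completeness combined: for every finite set of clauses s and every objective formula α, there exists a (large enough) belief level k ≥ 0 such that s ⊨ˢ B_k α if and only if s ⊨ α (classical entailment). -/

import Mathlib

/-! ## Limited belief: basic syntax and semantics (Schwering 2017, quantifier-free). -/

/-- Standard names (a countably infinite supply). -/
abbrev Name := ℕ

/-- Function terms `f(n₁,…,n_j)`: a function symbol applied to standard names. -/
structure FnTerm where
  sym : ℕ
  args : List Name
deriving DecidableEq, Inhabited

/-- Literals `t ≈ n` (pos) and `t ≉ n` (neg). -/
inductive Lit where
  | pos (t : FnTerm) (n : Name)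
  | neg (t : FnTerm) (n : Name)
deriving DecidableEq

instance : Inhabited Lit := ⟨.pos default 0⟩

/-- The left-hand side (function term) of a literal. -/
def Lit.lhs : Lit → FnTerm
  | .pos t _ => t
  | .neg t _ => t

/-- The right-hand side (standard name) of a literal. -/
def Lit.rhs : Lit → Name
  | .pos _ n => n
  | .neg _ n => n

/-- The negation `¬ℓ` of a literal. -/
def Lit.negate : Lit → Lit
  | .pos t n => .neg t n
  | .neg t n => .pos t n

/-- Names occurring in a literal. -/
def Lit.names (ℓ : Lit) : Finset Name := insert ℓ.rhs ℓ.lhs.args.toFinset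

/-- Two literals are complementary iff they are of the form `t ≈ n` and `t ≉ n`,
or of the form `t ≈ n` and `t ≈ n'` for distinct `n, n'`. -/
def Lit.complementary : Lit → Lit → Bool
  | .pos t n, .neg t' n' => t == t' && n == n'
  | .neg t n, .pos t' n' => t == t' && n == n'
  | .pos t n, .pos t' n' => t == t' && n != n'
  | .neg _ _, .neg _ _ => false

/-- A clause is a (finite) set of literals. -/
abbrev Clause := Finset Lit

/-- Unit propagation of clause `c` with literal `ℓ`: remove from `c` all
literals complementary to `ℓ`. -/
def Clause.prop (c : Clause) (ℓ : Lit) : Clause :=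
  c.filter (fun ℓ' => Lit.complementary ℓ' ℓ = false)

/-- `c₁` subsumes `c₂` iff for every `t ≈ n ∈ c₁`, `t ≈ n ∈ c₂` or `t ≉ n' ∈ c₂`
for some `n' ≠ n`, and for every `t ≉ n ∈ c₁`, `t ≉ n ∈ c₂`. -/
def Clause.subsumes (c₁ c₂ : Clause) : Prop :=
  (∀ t n, Lit.pos t n ∈ c₁ → Lit.pos t n ∈ c₂ ∨ ∃ n', n' ≠ n ∧ Lit.neg t n' ∈ c₂) ∧
  (∀ t n, Lit.neg t n ∈ c₁ → Lit.neg t n ∈ c₂)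

/-- `UP s`: the closure of the set of clauses `s` under unit propagation and
subsumption.  `UP s c` means `c ∈ UP(s)`. -/
inductive UP (s : Set Clause) : Clause → Prop
  | mem {c : Clause} : c ∈ s → UP s c
  | unit {c : Clause} {ℓ : Lit} : UP s {ℓ} → UP s c → UP s (c.prop ℓ)
  | sub {c₁ c₂ : Clause} : UP s c₁ → c₁.subsumes c₂ → UP s c₂

/-- Objective formulas: literals (`atom` is `t ≈ n`, `not atom` is `t ≉ n`),
negation and disjunction. -/
inductive Form where
  | atom (t : FnTerm) (n : Name)
  | not (φ : Form)
  | or (φ ψ : Form)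
deriving DecidableEq

/-- `α ∧ β` abbreviates `¬(¬α ∨ ¬β)`. -/
def Form.and (φ ψ : Form) : Form := .not (.or (.not φ) (.not ψ))

/-- `α → β` abbreviates `¬α ∨ β`. -/
def Form.imp (φ ψ : Form) : Form := .or (.not φ) ψ

/-- A formula is (syntactically) a clause iff it is a disjunction of literals. -/
def Form.isClause : Form → Bool
  | .atom _ _ => true
  | .not (.atom _ _) => true
  | .not _ => false
  | .or φ ψ => φ.isClause && ψ.isClause

/-- The set of literals of a clause-formula. -/
def Form.lits : Form → Clause
  | .atom t n => {Lit.pos t n}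
  | .not (.atom t n) => {Lit.neg t n}
  | .not _ => ∅
  | .or φ ψ => φ.lits ∪ ψ.lits

/-- The limited-belief truth relation `s ⊨ˢ α` for objective formulas:
a clause is true iff it is in `UP(s)`; a non-clause disjunction is true iff one
of its disjuncts is; `¬(α ∨ β)` is true iff `¬α` and `¬β` are; `¬¬α` is true
iff `α` is. -/
def sat (s : Set Clause) : Form → Prop
  | .atom t n => UP s {Lit.pos t n}
  | .not (.atom t n) => UP s {Lit.neg t n}
  | .not (.not φ) => sat s φ
  | .not (.or φ ψ) => sat s (.not φ) ∧ sat s (.not ψ)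
  | .or φ ψ => if (Form.or φ ψ).isClause then UP s (Form.or φ ψ).lits
               else sat s φ ∨ sat s ψ

/-- `satB s k α` is `s ⊨ˢ B_k α`: `B₀ α` holds iff `α` does, and `B_{k+1} α`
holds iff for some function term `t`, for all names `n`,
`s ∪ {t ≈ n} ⊨ˢ B_k α`. -/
def satB (s : Set Clause) : ℕ → Form → Prop
  | 0, φ => sat s φ
  | k+1, φ => ∃ t : FnTerm, ∀ n : Name, satB (s ∪ {({Lit.pos t n} : Clause)}) k φ

/-- A world maps function terms to standard names. -/
abbrev World := FnTerm → Name

/-- Classical truth of a literal in a world. -/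
def Lit.holds (w : World) : Lit → Prop
  | .pos t n => w t = n
  | .neg t n => w t ≠ n

/-- Classical truth of a clause in a world. -/
def Clause.holds (w : World) (c : Clause) : Prop := ∃ ℓ ∈ c, ℓ.holds w

/-- Classical truth of an objective formula in a world. -/
def wsat (w : World) : Form → Prop
  | .atom t n => w t = n
  | .not φ => ¬ wsat w φ
  | .or φ ψ => wsat w φ ∨ wsat w ψ

/-- Classical entailment `s ⊨ α`. -/
def entails (s : Set Clause) (φ : Form) : Prop :=
  ∀ w : World, (∀ c ∈ s, c.holds w) → wsat w φ

/-- Classical entailment of a clause (disjunction of its literals). -/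
def entailsClause (s : Set Clause) (c : Clause) : Prop :=
  ∀ w : World, (∀ c' ∈ s, c'.holds w) → c.holds w

/-- Function terms mentioned in a formula. -/
def Form.terms : Form → Finset FnTerm
  | .atom t _ => {t}
  | .not φ => φ.terms
  | .or φ ψ => φ.terms ∪ ψ.terms

/-- Standard names mentioned in a formula. -/
def Form.names : Form → Finset Name
  | .atom t n => insert n t.args.toFinset
  | .not φ => φ.names
  | .or φ ψ => φ.names ∪ ψ.names

theorem UP_sound {s : Set Clause} {w : World} (hw : ∀ c ∈ s, c.holds w) {c : Clause}
    (h : UP s c) : c.holds w := by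
  induction h with
  | mem h => exact hw _ h
  | @unit c l h1 h2 ih1 ih2 =>
    obtain ⟨l1, hl1, hh1⟩ := ih1
    obtain ⟨l2, hl2, hh2⟩ := ih2
    rw [Finset.mem_singleton] at hl1
    subst hl1
    refine ⟨l2, ?_, hh2⟩
    unfold Clause.prop
    rw [Finset.mem_filter]
    refine ⟨hl2, ?_⟩
    cases l1 <;> cases l2 <;> simp_all [Lit.complementary, Lit.holds] <;> grind
  | @sub c1 c2 h1 h2 ih =>
    obtain ⟨l, hl, hh⟩ := ih
    cases l with
    | pos t n =>
      rcases h2.1 t n hl with h | ⟨n', hn, h⟩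
      · exact ⟨_, h, hh⟩
      · refine ⟨_, h, ?_⟩
        simp only [Lit.holds] at *
        grind
    | neg t n => exact ⟨_, h2.2 t n hl, hh⟩

theorem wsat_clause (w : World) (φ : Form) (h : φ.isClause = true) :
    wsat w φ ↔ φ.lits.holds w := by
  induction φ with
  | atom t n => simp [wsat, Form.lits, Clause.holds, Lit.holds]
  | not φ ih =>
    cases φ with
    | atom t n => simp [wsat, Form.lits, Clause.holds, Lit.holds]
    | not φ => simp [Form.isClause] at h
    | or φ ψ => simp [Form.isClause] at h
  | or φ ψ ih1 ih2 =>
    simp only [Form.isClause, Bool.and_eq_true] at h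
    simp only [wsat, Form.lits, ih1 h.1, ih2 h.2, Clause.holds, Finset.mem_union]
    grind

theorem sat_sound {s : Set Clause} {w : World} (hw : ∀ c ∈ s, c.holds w) (φ : Form) :
    (sat s φ → wsat w φ) ∧ (sat s (.not φ) → ¬ wsat w φ) := by
  induction φ with
  | atom t n =>
    constructor
    · intro h
      have h' : UP s {Lit.pos t n} := by simpa [sat] using h
      simpa [Clause.holds, Lit.holds, wsat] using UP_sound hw h'
    · intro h
      have h' : UP s {Lit.neg t n} := by simpa [sat] using h
      simpa [Clause.holds, Lit.holds, wsat] using UP_sound hw h'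
  | not φ ih =>
    refine ⟨ih.2, fun h => ?_⟩
    have h' : sat s φ := by simpa [sat] using h
    simpa [wsat] using ih.1 h'
  | or φ ψ ih1 ih2 =>
    constructor
    · intro h
      rw [sat] at h
      split_ifs at h with hc
      · exact (wsat_clause w _ hc).2 (UP_sound hw h)
      · exact h.imp ih1.1 ih2.1
    · intro h
      rw [sat] at h
      simp only [wsat, not_or]
      exact ⟨ih1.2 h.1, ih2.2 h.2⟩

theorem satB_sound (k : ℕ) (φ : Form) : ∀ (s : Set Clause) (w : World),
    (∀ c ∈ s, c.holds w) → satB s k φ → wsat w φ := by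
  induction k with
  | zero => intro s w hw h; exact (sat_sound hw φ).1 h
  | succ k ih =>
    intro s w hw h
    obtain ⟨t, ht⟩ := h
    refine ih _ w ?_ (ht (w t))
    rintro c (hc | hc)
    · exact hw c hc
    · rw [Set.mem_singleton_iff] at hc
      subst hc
      exact ⟨_, Finset.mem_singleton_self _, rfl⟩

theorem UP_empty {S : Set Clause} {w : World} {T : Finset FnTerm}
    (hT : ∀ t ∈ T, UP S {Lit.pos t (w t)}) (c : Clause) :
    UP S c → (∀ l ∈ c, l.lhs ∈ T) → ¬ c.holds w → UP S ∅ := by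
  induction c using Finset.strongInduction with
  | H c ih =>
    intro hc hl hn
    rcases c.eq_empty_or_nonempty with rfl | ⟨l, hlc⟩
    · exact hc
    · have hsub : Clause.prop c (Lit.pos l.lhs (w l.lhs)) ⊆ c := Finset.filter_subset _ _
      refine ih (Clause.prop c (Lit.pos l.lhs (w l.lhs))) ?_ (UP.unit (hT _ (hl l hlc)) hc)
        (fun l' h' => hl l' (hsub h')) ?_
      · refine (Finset.ssubset_iff_of_subset hsub).2 ⟨l, hlc, ?_⟩
        have hf : ¬ l.holds w := fun h => hn ⟨l, hlc, h⟩
        unfold Clause.prop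
        cases l <;> simp_all [Lit.complementary, Lit.holds, Lit.lhs] <;> grind
      · rintro ⟨l', h', hh⟩
        exact hn ⟨l', hsub h', hh⟩

theorem sat_of_empty {S : Set Clause} (h : UP S ∅) (φ : Form) :
    sat S φ ∧ sat S (.not φ) := by
  have hall : ∀ c, UP S c := fun c => UP.sub h (by simp [Clause.subsumes])
  induction φ with
  | atom t n => simp [sat, hall]
  | not φ ih => exact ⟨ih.2, by rw [sat]; exact ih.1⟩
  | or φ ψ ih1 ih2 =>
    constructor
    · rw [sat]
      split_ifs
      · exact hall _
      · exact Or.inl ih1.1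
    · rw [sat]; exact ⟨ih1.2, ih2.2⟩

theorem lits_terms (φ : Form) : ∀ l ∈ φ.lits, l.lhs ∈ φ.terms := by
  induction φ with
  | atom t n => simp [Form.lits, Form.terms, Lit.lhs]
  | not φ ih =>
    cases φ <;> simp [Form.lits, Form.terms, Lit.lhs]
  | or φ ψ ih1 ih2 =>
    intro l hl
    simp only [Form.lits, Form.terms, Finset.mem_union] at *
    exact hl.imp (ih1 l) (ih2 l)

theorem UP_of_holds {S : Set Clause} {w : World} {T : Finset FnTerm}
    (hT : ∀ t ∈ T, UP S {Lit.pos t (w t)}) (c : Clause)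
    (hl : ∀ l ∈ c, l.lhs ∈ T) (h : c.holds w) : UP S c := by
  obtain ⟨l, hlc, hh⟩ := h
  refine UP.sub (hT _ (hl l hlc)) ?_
  cases l with
  | pos t n =>
    simp only [Lit.holds] at hh
    subst hh
    simp [Clause.subsumes, Lit.lhs, hlc]
  | neg t n =>
    simp only [Lit.holds] at hh
    simp only [Clause.subsumes, Lit.lhs, Finset.mem_singleton, Lit.pos.injEq, reduceCtorEq,
      false_imp_iff, implies_true, and_true]
    rintro _ _ ⟨rfl, rfl⟩
    exact Or.inr ⟨n, hh.symm, hlc⟩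

theorem sat_complete {S : Set Clause} {w : World} {T : Finset FnTerm}
    (hT : ∀ t ∈ T, UP S {Lit.pos t (w t)}) (φ : Form) : φ.terms ⊆ T →
    (wsat w φ → sat S φ) ∧ (¬ wsat w φ → sat S (.not φ)) := by
  induction φ with
  | atom t n =>
    intro ht
    have ht' : t ∈ T := ht (by simp [Form.terms])
    constructor
    · intro h
      rw [sat]
      exact UP_of_holds hT _ (by simpa [Lit.lhs] using ht')
        ⟨_, Finset.mem_singleton_self _, h⟩
    · intro h
      rw [sat]
      exact UP_of_holds hT _ (by simpa [Lit.lhs] using ht')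
        ⟨_, Finset.mem_singleton_self _, h⟩
  | not φ ih =>
    intro ht
    refine ⟨(ih ht).2, fun h => ?_⟩
    rw [sat]
    exact (ih ht).1 (not_not.1 h)
  | or φ ψ ih1 ih2 =>
    intro ht
    have h1 := ih1 (Finset.union_subset_left ht)
    have h2 := ih2 (Finset.union_subset_right ht)
    constructor
    · intro h
      rw [sat]
      split_ifs with hc
      · exact UP_of_holds hT _ (fun l hl => ht (lits_terms _ l hl)) ((wsat_clause w _ hc).1 h)
      · exact h.imp h1.1 h2.1
    · intro h
      rw [sat]
      simp only [wsat, not_or] at h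
      exact ⟨h1.2 h.1, h2.2 h.2⟩

theorem satB_of_list (φ : Form) (L : List FnTerm) : L.Nodup → ∀ s : Set Clause,
    (∀ w : World, sat (s ∪ {c | ∃ t ∈ L, c = {Lit.pos t (w t)}}) φ) →
    satB s L.length φ := by
  induction L with
  | nil =>
    intro _ s h
    have := h (fun _ => 0)
    simpa [satB] using this
  | cons t L ih =>
    intro hnd s h
    rw [List.nodup_cons] at hnd
    refine ⟨t, fun n => ih hnd.2 _ fun w => ?_⟩
    convert h (Function.update w t n) using 1
    ext c
    have hne : ∀ t' ∈ L, Function.update w t n t' = w t' := by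
      intro t' ht'
      have e : t' ≠ t := by
        rintro rfl
        exact hnd.1 ht'
      exact Function.update_of_ne e _ _
    simp only [Set.mem_union, Set.mem_singleton_iff, Set.mem_ofPred_eq, List.mem_cons,
      exists_eq_or_imp, Function.update_self]
    rw [or_assoc]
    refine or_congr Iff.rfl (or_congr Iff.rfl ?_)
    refine exists_congr fun t' => and_congr_right fun ht' => ?_
    rw [hne t' ht']

/-- **Soundness and eventual completeness combined** (Proposition 3): for every
finite set of clauses `s` and objective formula `α` there is a large-enough
belief level `k` such that `s ⊨ˢ B_k α` iff `s ⊨ α`. -/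
theorem limited_belief_sound_eventually_complete (s : Set Clause)
    (hfin : s.Finite) (α : Form) :
    ∃ k : ℕ, (satB s k α ↔ entails s α) := by
  classical
  let T : Finset FnTerm := hfin.toFinset.biUnion (fun c => c.image Lit.lhs) ∪ α.terms
  refine ⟨T.toList.length, fun h w hw => satB_sound _ α s w hw h, fun hent => ?_⟩
  refine satB_of_list α _ T.nodup_toList s fun w => ?_
  have hT : ∀ t ∈ T, UP (s ∪ {c | ∃ t ∈ T.toList, c = {Lit.pos t (w t)}})
      {Lit.pos t (w t)} :=
    fun t ht => UP.mem (Or.inr ⟨t, Finset.mem_toList.2 ht, rfl⟩)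
  by_cases hw : ∀ c ∈ s, c.holds w
  · exact (sat_complete hT α Finset.subset_union_right).1 (hent w hw)
  · push Not at hw
    obtain ⟨c, hc, hn⟩ := hw
    refine (sat_of_empty (UP_empty hT c (UP.mem (Or.inl hc)) (fun l hl => ?_) hn) α).1
    refine Finset.mem_union_left _ (Finset.mem_biUnion.2 ⟨c, by simpa using hc, ?_⟩)
    exact Finset.mem_image_of_mem _ hl
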